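/- For each positive integer n, the sum over all binary trees T with n vertices of the product over all vertices v of T of 1/((2h_v + 1) · 2^{2h_v - 1}) equals 1/(2n+1)!, where h_v is the hook length of v. -/

import Mathlib

/-- A binary tree: `nil` is the empty tree, and a vertex may have an empty or
nonempty left subtree and an empty or nonempty right subtree.  The binary
trees with `n` vertices are the `T : BinTree` with `T.size = n`. -/
inductive BinTree : Type where
  | nil : BinTree
  | node (l r : BinTree) : BinTree
deriving DecidableEq

/-- The number of vertices of a binary tree. -/
def BinTree.size : BinTree → ℕ
  | .nil => 0
  | .node l r => l.size + r.size + 1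

/-- The product, over all vertices `v` of a binary tree, of `f h_v`, where
`h_v` is the hook length of `v` (the number of descendants of `v`, including
`v` itself). -/
def BinTree.hookProd (f : ℕ → ℝ) : BinTree → ℝ
  | .nil => 1
  | .node l r => f (l.size + r.size + 1) * l.hookProd f * r.hookProd f

/-!
Removing the root of a nonempty tree leaves a pair of trees, so the hook sums `aₙ` satisfy
`aₙ₊₁ = f (n + 1) * ∑_{i + j = n} aᵢ aⱼ` with `a₀ = 1`, and this recurrence determines them.
For the weight of the theorem it is solved by `aₙ = 1 / (2n + 1)!`, the coefficients of `sinh`: the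
convolution is then read off from `sinh² x = (cosh 2x - 1) / 2`, which in terms of binomial
coefficients says that the odd-indexed ones in row `2n + 2` sum to `2 ^ (2n + 1)`.
-/

open Finset
open scoped Nat

theorem sum_range_choose_succ_odd (m k : ℕ) :
    ∑ i ∈ range k, (m + 1).choose (2 * i + 1) = ∑ j ∈ range (2 * k), m.choose j := by
  induction k with
  | zero => rfl
  | succ k ih =>
    rw [sum_range_succ, ih, mul_add_one, sum_range_succ, sum_range_succ, Nat.choose_succ_succ,
      add_assoc]

theorem sum_antidiagonal_choose_odd (n : ℕ) :
    ∑ p ∈ antidiagonal n, (2 * n + 2).choose (2 * p.1 + 1) = 2 ^ (2 * n + 1) := by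
  rw [Nat.sum_antidiagonal_eq_sum_range_succ_mk, sum_range_choose_succ_odd,
    Nat.succ_eq_add_one, mul_add_one, Nat.sum_range_choose]

theorem sum_antidiagonal_one_div_factorial_odd_mul (K : Type*) [Field K] [CharZero K] (n : ℕ) :
    ∑ p ∈ antidiagonal n, 1 / ((2 * p.1 + 1)! : K) * (1 / ((2 * p.2 + 1)! : K)) =
      2 ^ (2 * n + 1) / ((2 * n + 2)! : K) := by
  have term_eq : ∀ p ∈ antidiagonal n,
      1 / ((2 * p.1 + 1)! : K) * (1 / ((2 * p.2 + 1)! : K)) =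
        ((2 * n + 2).choose (2 * p.1 + 1) : K) / ((2 * n + 2)! : K) := by
    intro p hp
    have hsum : 2 * n + 2 = (2 * p.1 + 1) + (2 * p.2 + 1) := by
      rw [← mem_antidiagonal.1 hp]
      ring
    have hfact : ((2 * p.1 + 1 + (2 * p.2 + 1))! : K) ≠ 0 :=
      Nat.cast_ne_zero.2 (Nat.factorial_ne_zero _)
    rw [hsum, Nat.cast_add_choose]
    field_simp
  rw [sum_congr rfl term_eq, ← sum_div, ← Nat.cast_sum, sum_antidiagonal_choose_odd]
  norm_cast

namespace BinTree

/-- The decomposition of a binary tree with `n + 1` vertices into the left and right subtrees of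
its root, indexed by the pair of sizes of these subtrees. -/
def rootEquiv (n : ℕ) :
    {T : BinTree // T.size = n + 1} ≃
      Σ p : antidiagonal n, {l : BinTree // l.size = p.1.1} × {r : BinTree // r.size = p.1.2} where
  toFun
    | ⟨.node l r, h⟩ =>
      ⟨⟨(l.size, r.size), mem_antidiagonal.2 (Nat.succ.inj h)⟩, ⟨l, rfl⟩, ⟨r, rfl⟩⟩
  invFun
    | ⟨p, l, r⟩ => ⟨.node l r, by rw [size, l.2, r.2, mem_antidiagonal.1 p.2]⟩
  left_inv := by
    rintro ⟨_ | ⟨l, r⟩, h⟩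
    · cases h
    · rfl
  right_inv := by
    rintro ⟨⟨⟨i, j⟩, _⟩, ⟨l, hl : l.size = i⟩, ⟨r, hr : r.size = j⟩⟩
    subst hl hr
    rfl

instance uniqueSizeEqZero : Unique {T : BinTree // T.size = 0} where
  default := ⟨.nil, rfl⟩
  uniq
    | ⟨.nil, _⟩ => rfl

instance finiteSizeEq (n : ℕ) : Finite {T : BinTree // T.size = n} := by
  induction n using Nat.strong_induction_on with
  | _ n ih =>
    cases n with
    | zero => infer_instance
    | succ n =>
      have finite_subtrees (p : antidiagonal n) :
          Finite ({l : BinTree // l.size = p.1.1} × {r : BinTree // r.size = p.1.2}) :=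
        have := ih p.1.1 (Nat.antidiagonal.fst_lt p.2)
        have := ih p.1.2 (Nat.antidiagonal.snd_lt p.2)
        inferInstance
      exact Finite.of_equiv _ (rootEquiv n).symm

/-- The sum of `∏ᵥ f hᵥ` over the binary trees with `n` vertices. There are finitely many such
trees, so the `tsum` is a finite sum. -/
noncomputable def hookSum (f : ℕ → ℝ) (n : ℕ) : ℝ :=
  ∑' T : {T : BinTree // T.size = n}, (T : BinTree).hookProd f

theorem hookProd_rootEquiv_symm (f : ℕ → ℝ) {n : ℕ} (p : antidiagonal n)
    (l : {l : BinTree // l.size = p.1.1}) (r : {r : BinTree // r.size = p.1.2}) :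
    ((rootEquiv n).symm ⟨p, l, r⟩ : BinTree).hookProd f =
      f (n + 1) * ((l : BinTree).hookProd f * (r : BinTree).hookProd f) := by
  change f ((l : BinTree).size + (r : BinTree).size + 1) * _ * _ = _
  rw [l.2, r.2, mem_antidiagonal.1 p.2, mul_assoc]

@[simp]
theorem hookSum_zero (f : ℕ → ℝ) : hookSum f 0 = 1 := by
  rw [hookSum, tsum_fintype, Fintype.sum_unique]
  rfl

theorem hookSum_succ (f : ℕ → ℝ) (n : ℕ) :
    hookSum f (n + 1) =
      f (n + 1) * ∑ p ∈ antidiagonal n, hookSum f p.1 * hookSum f p.2 := by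
  have fintypeSizeEq (m : ℕ) : Fintype {T : BinTree // T.size = m} := Fintype.ofFinite _
  simp only [hookSum, tsum_fintype]
  rw [← (rootEquiv n).symm.sum_comp, Fintype.sum_sigma, ← sum_coe_sort (antidiagonal n), mul_sum]
  refine sum_congr rfl fun p _ => ?_
  simp only [hookProd_rootEquiv_symm, ← mul_sum, Fintype.sum_mul_sum, Fintype.sum_prod_type]

theorem hookSum_eq_of_recurrence {f a : ℕ → ℝ} (h_zero : a 0 = 1)
    (h_succ : ∀ n, a (n + 1) = f (n + 1) * ∑ p ∈ antidiagonal n, a p.1 * a p.2) (n : ℕ) :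
    hookSum f n = a n := by
  induction n using Nat.strong_induction_on with
  | _ n ih =>
    cases n with
    | zero => rw [hookSum_zero, h_zero]
    | succ n =>
      rw [hookSum_succ, h_succ]
      congr 1
      refine sum_congr rfl fun p hp => ?_
      rw [ih p.1 (Nat.antidiagonal.fst_lt hp),
        ih p.2 (Nat.antidiagonal.snd_lt hp)]

end BinTree

/-- Han's second formula: for every positive integer `n`,
`∑_{T ∈ B(n)} ∏_{v ∈ T} 1/((2h_v+1) 2^{2h_v-1}) = 1/(2n+1)!`. -/
theorem han_second_hook_length_formula (n : ℕ) (hn : 0 < n) :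
    ∑' T : {T : BinTree // T.size = n},
      (T : BinTree).hookProd (fun h => 1 / (((2 * h + 1 : ℕ) : ℝ) * 2 ^ (2 * h - 1))) =
      1 / (Nat.factorial (2 * n + 1) : ℝ) := by
  refine BinTree.hookSum_eq_of_recurrence (a := fun n => 1 / ((2 * n + 1)! : ℝ)) (by simp)
    (fun m => ?_) n
  have hexp : 2 * (m + 1) - 1 = 2 * m + 1 := by omega
  have hfact : (2 * (m + 1) + 1)! = (2 * (m + 1) + 1) * (2 * m + 2)! := Nat.factorial_succ _
  rw [sum_antidiagonal_one_div_factorial_odd_mul, hexp, hfact, Nat.cast_mul]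
  field_simp
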